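/- Let s be a complex number with Re(s) > 1/2. Then 4(2s−1) ∫₀^∞ g_s(1 + u²) log u du = −γ − log 4 − Ψ(s + 1/2) + 1/(2s−1). -/

import Mathlib

open MeasureTheory

/-- The Green's function of the resolvent `(Δ_ℍ - s(1-s))⁻¹` on the hyperbolic plane,
expressed in the point-pair invariant `σ = cosh²(d(z,z')/2)`, via Euler's integral
representation: `g_s(σ) = (1/(4π)) ∫₀¹ t^(s-1) (1-t)^(s-1) (σ-t)^(-s) dt`. -/
noncomputable def greenH (s : ℂ) (σ : ℝ) : ℂ :=
  (1 / (4 * (Real.pi : ℂ))) * ∫ t in Set.Ioo (0:ℝ) 1,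
    (t : ℂ) ^ (s - 1) * ((1 : ℂ) - (t : ℂ)) ^ (s - 1) * ((σ : ℂ) - (t : ℂ)) ^ (-s)

/-- The digamma function `Ψ(z) = Γ'(z)/Γ(z)`. -/
noncomputable def digamma (z : ℂ) : ℂ := deriv Complex.Gamma z / Complex.Gamma z

/-!
The integral is the derivative at `w = 1` of the Mellin transform of `u ↦ g_s(1 + u²)`. Inserting
Euler's integral for `g_s` and integrating over `u` first, this transform is a product of two Beta
integrals, `Γ(w/2)² Γ(s - w/2) / (8π Γ(s + w/2))`. At `w = 1` its value is `1 / (4(2s - 1))` and its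
logarithmic derivative is `Ψ(1/2) - (Ψ(s - 1/2) + Ψ(s + 1/2)) / 2`, which the recurrence of `Ψ`
and the value `Ψ(1/2) = -γ - log 4` turn into the stated form.
-/

open Set Filter Topology
open Complex hiding digamma digamma_one_half

/-! ### Differentiating a Mellin transform inside its strip of convergence -/

lemma rpow_le_rpow_add_rpow_of_mem_Icc {x a b c : ℝ} (hx : 0 < x) (hc : c ∈ Icc a b) :
    x ^ c ≤ x ^ a + x ^ b := by
  rcases le_total 1 x with h | h
  · exact le_add_of_nonneg_of_le (by positivity) (Real.rpow_le_rpow_of_exponent_le h hc.2)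
  · exact le_add_of_le_of_nonneg (Real.rpow_le_rpow_of_exponent_ge hx h hc.1) (by positivity)

lemma abs_log_le_rpow_add_rpow_neg_div {x δ : ℝ} (hx : 0 < x) (hδ : 0 < δ) :
    |Real.log x| ≤ (x ^ δ + x ^ (-δ)) / δ := by
  have hpos : Real.log x ≤ x ^ δ / δ := Real.log_le_rpow_div hx.le hδ
  have hneg : -Real.log x ≤ x ^ (-δ) / δ := by
    simpa [Real.rpow_neg hx.le, Real.inv_rpow hx.le] using
      Real.log_le_rpow_div (inv_pos.2 hx).le hδ
  rw [add_div]
  exact abs_le'.2 ⟨le_add_of_le_of_nonneg hpos (by positivity),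
    le_add_of_nonneg_of_le (by positivity) hneg⟩

lemma rpow_mul_abs_log_le {x a b c δ : ℝ} (hx : 0 < x) (hδ : 0 < δ)
    (hc : c ∈ Icc (a + δ) (b - δ)) :
    x ^ c * |Real.log x| ≤ 2 / δ * (x ^ a + x ^ b) := by
  have hadd : x ^ (c + δ) ≤ x ^ a + x ^ b :=
    rpow_le_rpow_add_rpow_of_mem_Icc hx ⟨by linarith [hc.1], by linarith [hc.2]⟩
  have hsub : x ^ (c + -δ) ≤ x ^ a + x ^ b :=
    rpow_le_rpow_add_rpow_of_mem_Icc hx ⟨by linarith [hc.1], by linarith [hc.2]⟩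
  calc x ^ c * |Real.log x| ≤ x ^ c * ((x ^ δ + x ^ (-δ)) / δ) := by
        gcongr
        exact abs_log_le_rpow_add_rpow_neg_div hx hδ
    _ = (x ^ (c + δ) + x ^ (c + -δ)) / δ := by rw [Real.rpow_add hx, Real.rpow_add hx]; ring
    _ ≤ (x ^ a + x ^ b + (x ^ a + x ^ b)) / δ := by gcongr
    _ = 2 / δ * (x ^ a + x ^ b) := by ring

section MellinDeriv

variable {E : Type*} [NormedAddCommGroup E] [NormedSpace ℂ E] {f : ℝ → E}

lemma aestronglyMeasurable_of_mellinConvergent {z : ℂ} (hf : MellinConvergent f z) :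
    AEStronglyMeasurable f (volume.restrict (Ioi 0)) := by
  have hcpow : Measurable fun u : ℝ ↦ (u : ℂ) ^ (-(z - 1)) := by fun_prop
  refine (hcpow.aestronglyMeasurable.smul hf.aestronglyMeasurable).congr ?_
  filter_upwards [ae_restrict_mem measurableSet_Ioi] with u hu
  have hu0 : (u : ℂ) ≠ 0 := ofReal_ne_zero.2 (ne_of_gt hu)
  simp only [Pi.smul_apply', smul_smul]
  rw [← cpow_add _ _ hu0, neg_add_cancel, cpow_zero, one_smul]

lemma integrableOn_rpow_mul_norm_of_mellinConvergent {a : ℝ} (hf : MellinConvergent f a) :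
    IntegrableOn (fun u ↦ u ^ (a - 1) * ‖f u‖) (Ioi 0) := by
  refine hf.norm.congr ?_
  filter_upwards [ae_restrict_mem measurableSet_Ioi] with u hu
  rw [norm_smul, norm_cpow_eq_rpow_re_of_pos hu, sub_re, one_re, ofReal_re]

lemma hasDerivAt_ofReal_cpow_sub_one {u : ℝ} (hu : 0 < u) (z : ℂ) :
    HasDerivAt (fun z : ℂ ↦ (u : ℂ) ^ (z - 1)) ((u : ℂ) ^ (z - 1) * Real.log u) z := by
  simpa [ofReal_log hu.le] using
    ((hasDerivAt_id z).sub_const 1).const_cpow (Or.inl (ofReal_ne_zero.2 hu.ne'))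

lemma mellinConvergent_of_re_mem_Icc {a b : ℝ} {z : ℂ} (ha : MellinConvergent f a)
    (hb : MellinConvergent f b) (hz : z.re ∈ Icc a b) : MellinConvergent f z := by
  have hcpow : Measurable fun u : ℝ ↦ (u : ℂ) ^ (z - 1) := by fun_prop
  refine ((integrableOn_rpow_mul_norm_of_mellinConvergent ha).add
    (integrableOn_rpow_mul_norm_of_mellinConvergent hb)).mono'
      (hcpow.aestronglyMeasurable.smul (aestronglyMeasurable_of_mellinConvergent ha)) ?_
  filter_upwards [ae_restrict_mem measurableSet_Ioi] with u hu
  rw [norm_smul, norm_cpow_eq_rpow_re_of_pos hu, Pi.add_apply, ← add_mul]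
  gcongr
  exact rpow_le_rpow_add_rpow_of_mem_Icc hu ⟨by simpa using hz.1, by simpa using hz.2⟩

theorem hasDerivAt_mellin_of_mellinConvergent {a b : ℝ} {z : ℂ} (ha : MellinConvergent f a)
    (hb : MellinConvergent f b) (hz : z.re ∈ Ioo a b) :
    HasDerivAt (mellin f) (mellin (fun u ↦ Real.log u • f u) z) z := by
  obtain ⟨δ, hδ, hδa, hδb⟩ : ∃ δ > 0, a + 2 * δ ≤ z.re ∧ z.re ≤ b - 2 * δ := by
    refine ⟨min (z.re - a) (b - z.re) / 2, ?_, ?_, ?_⟩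
    · exact half_pos (lt_min (sub_pos.2 hz.1) (sub_pos.2 hz.2))
    · linarith [min_le_left (z.re - a) (b - z.re)]
    · linarith [min_le_right (z.re - a) (b - z.re)]
  have hmeas : AEStronglyMeasurable f (volume.restrict (Ioi 0)) :=
    aestronglyMeasurable_of_mellinConvergent ha
  have hcpow (w : ℂ) : Measurable fun u : ℝ ↦ (u : ℂ) ^ (w - 1) := by fun_prop
  have hbound : ∀ u ∈ Ioi (0 : ℝ), ∀ w ∈ Metric.ball z δ,
      ‖((u : ℂ) ^ (w - 1) * Real.log u) • f u‖ ≤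
        2 / δ * (u ^ (a - 1) * ‖f u‖ + u ^ (b - 1) * ‖f u‖) := by
    intro u hu w hw
    have hwz : |w.re - z.re| < δ := (abs_re_le_norm (w - z)).trans_lt (mem_ball_iff_norm.1 hw)
    rw [norm_smul, norm_mul, norm_cpow_eq_rpow_re_of_pos hu, norm_real, Real.norm_eq_abs,
      ← add_mul, ← mul_assoc]
    refine mul_le_mul_of_nonneg_right ?_ (norm_nonneg _)
    rw [abs_lt] at hwz
    refine rpow_mul_abs_log_le hu hδ ⟨?_, ?_⟩ <;> rw [sub_re, one_re] <;> linarith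
  have hderiv := (hasDerivAt_integral_of_dominated_loc_of_deriv_le (Metric.ball_mem_nhds z hδ)
    (Eventually.of_forall fun w ↦ (hcpow w).aestronglyMeasurable.smul hmeas)
    (mellinConvergent_of_re_mem_Icc ha hb (Ioo_subset_Icc_self hz))
    (((hcpow z).mul (by fun_prop)).aestronglyMeasurable.smul hmeas)
    ((ae_restrict_mem measurableSet_Ioi).mono hbound)
    (((integrableOn_rpow_mul_norm_of_mellinConvergent ha).add
      (integrableOn_rpow_mul_norm_of_mellinConvergent hb)).const_mul (2 / δ))
    ((ae_restrict_mem measurableSet_Ioi).mono fun u hu w _ ↦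
      (hasDerivAt_ofReal_cpow_sub_one hu w).smul_const (f u))).2
  simpa only [mellin, mul_smul, Complex.coe_smul] using! hderiv

end MellinDeriv

/-! ### Mellin transforms of Beta type -/

lemma betaIntegral_eq_setIntegral_Ioo (u v : ℂ) :
    betaIntegral u v = ∫ x in Ioo (0 : ℝ) 1, (x : ℂ) ^ (u - 1) * (1 - (x : ℂ)) ^ (v - 1) := by
  rw [betaIntegral, intervalIntegral.integral_of_le zero_le_one, integral_Ioc_eq_integral_Ioo]

lemma integrableOn_betaIntegrand {u v : ℂ} (hu : 0 < u.re) (hv : 0 < v.re) :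
    IntegrableOn (fun x : ℝ ↦ (x : ℂ) ^ (u - 1) * (1 - (x : ℂ)) ^ (v - 1)) (Ioo 0 1) :=
  (intervalIntegrable_iff_integrableOn_Ioo_of_le zero_le_one).1 (betaIntegral_convergent hu hv)

lemma ofReal_inv_cpow {x : ℝ} (hx : 0 ≤ x) (w : ℂ) : ((x⁻¹ : ℝ) : ℂ) ^ w = (x : ℂ) ^ (-w) := by
  rw [ofReal_inv, inv_cpow _ _ (by simpa [arg_ofReal_of_nonneg hx] using Real.pi_ne_zero.symm),
    cpow_neg]

lemma image_inv_sub_one_Ioo : (fun x : ℝ ↦ x⁻¹ - 1) '' Ioo 0 1 = Ioi 0 := by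
  rw [← image_image (fun y : ℝ ↦ y - 1) (fun x ↦ x⁻¹), image_inv_eq_inv, inv_Ioo_0_left one_pos,
    image_sub_const_Ioi, inv_one, sub_self]

lemma abs_deriv_inv_sub_one_smul_eq_betaIntegrand {x : ℝ} (hx : x ∈ Ioo (0 : ℝ) 1) (s z : ℂ) :
    |-(x ^ 2)⁻¹| • (((x⁻¹ - 1 : ℝ) : ℂ) ^ (z - 1) • ((1 + (x⁻¹ - 1) : ℝ) : ℂ) ^ (-s)) =
      (x : ℂ) ^ (s - z - 1) * (1 - (x : ℂ)) ^ (z - 1) := by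
  have hx0 : (x : ℂ) ≠ 0 := ofReal_ne_zero.2 hx.1.ne'
  have hfactor : x⁻¹ - 1 = x⁻¹ * (1 - x) := by field_simp [hx.1.ne']
  have hsq : ((|-(x ^ 2)⁻¹| : ℝ) : ℂ) = (x : ℂ) ^ (-2 : ℂ) := by
    rw [abs_neg, abs_of_nonneg (by positivity), cpow_neg]
    norm_cast
  rw [add_sub_cancel, hfactor, ofReal_mul,
    mul_cpow_ofReal_nonneg (inv_nonneg.2 hx.1.le) (sub_nonneg.2 hx.2.le),
    ofReal_inv_cpow hx.1.le, ofReal_inv_cpow hx.1.le, real_smul, smul_eq_mul, hsq,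
    show s - z - 1 = -2 + (-(z - 1) + - -s) by ring, cpow_add _ _ hx0, cpow_add _ _ hx0]
  push_cast
  ring

lemma hasMellin_one_add_cpow_neg {s z : ℂ} (hz : 0 < z.re) (hzs : z.re < s.re) :
    HasMellin (fun v : ℝ ↦ ((1 + v : ℝ) : ℂ) ^ (-s)) z (betaIntegral (s - z) z) := by
  have hderiv : ∀ x ∈ Ioo (0 : ℝ) 1,
      HasDerivWithinAt (fun x : ℝ ↦ x⁻¹ - 1) (-(x ^ 2)⁻¹) (Ioo 0 1) x := fun x hx ↦
    ((hasDerivAt_inv hx.1.ne').sub_const 1).hasDerivWithinAt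
  have hinj : InjOn (fun x : ℝ ↦ x⁻¹ - 1) (Ioo 0 1) :=
    (sub_left_injective.comp inv_injective).injOn
  have hcongr := fun x (hx : x ∈ Ioo (0 : ℝ) 1) ↦
    abs_deriv_inv_sub_one_smul_eq_betaIntegrand hx s z
  constructor
  · rw [MellinConvergent, ← image_inv_sub_one_Ioo,
      integrableOn_image_iff_integrableOn_abs_deriv_smul measurableSet_Ioo hderiv hinj,
      integrableOn_congr_fun hcongr measurableSet_Ioo]
    exact integrableOn_betaIntegrand (by simpa using hzs) hz
  · rw [mellin, ← image_inv_sub_one_Ioo,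
      integral_image_eq_integral_abs_deriv_smul measurableSet_Ioo hderiv hinj,
      setIntegral_congr_fun measurableSet_Ioo hcongr, betaIntegral_eq_setIntegral_Ioo]

lemma hasMellin_add_sq_cpow_neg {a : ℝ} (ha : 0 < a) {s w : ℂ} (hw : 0 < w.re)
    (hws : w.re < 2 * s.re) :
    HasMellin (fun u : ℝ ↦ ((a + u ^ 2 : ℝ) : ℂ) ^ (-s)) w
      ((a : ℂ) ^ (w / 2 - s) * (betaIntegral (s - w / 2) (w / 2) / 2)) := by
  have hre : (w / 2).re = w.re / 2 := by simp
  obtain ⟨hconv, hval⟩ := hasMellin_one_add_cpow_neg (s := s) (z := w / 2)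
    (by linarith) (by linarith)
  have hscale : (fun u : ℝ ↦ ((a + u ^ 2 : ℝ) : ℂ) ^ (-s)) =
      fun u ↦ (a : ℂ) ^ (-s) • ((1 + a⁻¹ * u ^ (2 : ℝ) : ℝ) : ℂ) ^ (-s) := by
    funext u
    rw [Real.rpow_two, smul_eq_mul, ← mul_cpow_ofReal_nonneg ha.le (by positivity), ← ofReal_mul,
      mul_add, mul_one, mul_inv_cancel_left₀ ha.ne']
  rw [hscale]
  constructor
  · refine MellinConvergent.const_smul ?_ _
    rw [MellinConvergent.comp_rpow (f := fun v : ℝ ↦ ((1 + a⁻¹ * v : ℝ) : ℂ) ^ (-s)) two_ne_zero,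
      MellinConvergent.comp_mul_left (f := fun v : ℝ ↦ ((1 + v : ℝ) : ℂ) ^ (-s)) (inv_pos.2 ha)]
    exact_mod_cast hconv
  · rw [mellin_const_smul,
      mellin_comp_rpow (fun v : ℝ ↦ ((1 + a⁻¹ * v : ℝ) : ℂ) ^ (-s)), ofReal_ofNat,
      mellin_comp_mul_left (fun v : ℝ ↦ ((1 + v : ℝ) : ℂ) ^ (-s)) _ (inv_pos.2 ha), hval,
      ofReal_inv_cpow ha.le, neg_neg, sub_eq_add_neg (w / 2) s,
      cpow_add _ _ (ofReal_ne_zero.2 ha.ne')]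
    simp only [smul_eq_mul, real_smul, abs_two, ofReal_inv, ofReal_ofNat]
    ring

/-! ### The Mellin transform of the Green's function -/

/-- The integrand, in `(t, u)`, of the Mellin transform at `w` of `u ↦ 4π g_s(1 + u²)` once Euler's
integral for `g_s` is inserted. -/
noncomputable def greenMellinKernel (s w : ℂ) (t u : ℝ) : ℂ :=
  (t : ℂ) ^ (s - 1) * (1 - (t : ℂ)) ^ (s - 1) *
    ((u : ℂ) ^ (w - 1) * ((1 - t + u ^ 2 : ℝ) : ℂ) ^ (-s))

/-- The Mellin transform of `u ↦ g_s(1 + u²)` on the strip `0 < Re w < 2 Re s`, in closed form. -/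
noncomputable def greenMellin (s w : ℂ) : ℂ :=
  Gamma (w / 2) ^ 2 * Gamma (s - w / 2) / (8 * Real.pi * Gamma (s + w / 2))

lemma measurable_uncurry_greenMellinKernel (s w : ℂ) :
    Measurable (Function.uncurry (greenMellinKernel s w)) := by
  unfold greenMellinKernel Function.uncurry
  fun_prop

lemma ofReal_norm_greenMellinKernel (s w : ℂ) {t u : ℝ} (ht : t ∈ Ioo (0 : ℝ) 1) (hu : 0 < u) :
    (‖greenMellinKernel s w t u‖ : ℂ) = greenMellinKernel s.re w.re t u := by
  have ht' : 0 < 1 - t := sub_pos.2 ht.2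
  have hq : 0 < 1 - t + u ^ 2 := by positivity
  have hcast : 1 - (t : ℂ) = ((1 - t : ℝ) : ℂ) := by rw [ofReal_sub, ofReal_one]
  rw [greenMellinKernel, greenMellinKernel, hcast]
  simp only [norm_mul, norm_cpow_eq_rpow_re_of_pos ht.1, norm_cpow_eq_rpow_re_of_pos ht',
    norm_cpow_eq_rpow_re_of_pos hu, norm_cpow_eq_rpow_re_of_pos hq, ofReal_mul,
    ofReal_cpow ht.1.le, ofReal_cpow ht'.le, ofReal_cpow hu.le, ofReal_cpow hq.le]
  simp only [sub_re, neg_re, one_re, ofReal_sub, ofReal_neg, ofReal_one]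

section Strip

variable {s w : ℂ}

lemma integrableOn_greenMellinKernel (hw : 0 < w.re) (hws : w.re < 2 * s.re) {t : ℝ}
    (ht : t < 1) : IntegrableOn (greenMellinKernel s w t) (Ioi 0) :=
  (hasMellin_add_sq_cpow_neg (sub_pos.2 ht) hw hws).1.const_mul _

lemma integral_greenMellinKernel (hw : 0 < w.re) (hws : w.re < 2 * s.re) {t : ℝ} (ht : t < 1) :
    ∫ u in Ioi 0, greenMellinKernel s w t u =
      (t : ℂ) ^ (s - 1) * (1 - (t : ℂ)) ^ (w / 2 - 1) *
        (betaIntegral (s - w / 2) (w / 2) / 2) := by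
  have ht' : (1 - t : ℂ) ≠ 0 := by exact_mod_cast (sub_pos.2 ht).ne'
  have hmellin := (hasMellin_add_sq_cpow_neg (sub_pos.2 ht) hw hws).2
  simp only [mellin, smul_eq_mul] at hmellin
  simp only [greenMellinKernel]
  rw [integral_const_mul, hmellin, show w / 2 - 1 = s - 1 + (w / 2 - s) by ring,
    cpow_add _ _ ht', ofReal_sub, ofReal_one]
  ring

-- The norm of the kernel is the kernel at the real parts, so its integral is known exactly.
lemma ofReal_integral_norm_greenMellinKernel (hw : 0 < w.re) (hws : w.re < 2 * s.re) {t : ℝ}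
    (ht : t ∈ Ioo (0 : ℝ) 1) :
    ((∫ u in Ioi 0, ‖greenMellinKernel s w t u‖ : ℝ) : ℂ) =
      (t : ℂ) ^ ((s.re : ℂ) - 1) * (1 - (t : ℂ)) ^ ((w.re : ℂ) / 2 - 1) *
        (betaIntegral (s.re - w.re / 2) (w.re / 2) / 2) := by
  rw [← integral_greenMellinKernel (s := s.re) (w := w.re) hw hws ht.2, ← integral_complex_ofReal]
  exact setIntegral_congr_fun measurableSet_Ioi fun u hu ↦ ofReal_norm_greenMellinKernel s w ht hu

lemma integrable_uncurry_greenMellinKernel (hw : 0 < w.re) (hws : w.re < 2 * s.re) :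
    Integrable (Function.uncurry (greenMellinKernel s w))
      ((volume.restrict (Ioo 0 1)).prod (volume.restrict (Ioi 0))) := by
  refine (integrable_prod_iff
    (measurable_uncurry_greenMellinKernel s w).aestronglyMeasurable).2 ⟨?_, ?_⟩
  · filter_upwards [ae_restrict_mem measurableSet_Ioo] with t ht
    exact integrableOn_greenMellinKernel hw hws ht.2
  · refine ((integrableOn_betaIntegrand (u := s.re) (v := w.re / 2) (by rw [ofReal_re]; linarith)
      (by simpa using hw)).mul_const (betaIntegral (s.re - w.re / 2) (w.re / 2) / 2)).re.congr ?_
    filter_upwards [ae_restrict_mem measurableSet_Ioo] with t ht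
    rw [← ofReal_integral_norm_greenMellinKernel hw hws ht]
    exact ofReal_re _

lemma cpow_smul_greenH_one_add_sq (s w : ℂ) (u : ℝ) :
    (u : ℂ) ^ (w - 1) • greenH s (1 + u ^ 2) =
      1 / (4 * Real.pi) * ∫ t in Ioo 0 1, greenMellinKernel s w t u := by
  rw [greenH, smul_eq_mul, mul_left_comm, ← integral_const_mul]
  congr 1
  refine integral_congr_ae (.of_forall fun t ↦ ?_)
  simp only [greenMellinKernel, ← ofReal_sub, add_sub_right_comm]
  ring

lemma greenMellin_eq_betaIntegral_mul (hw : 0 < w.re) (hws : w.re < 2 * s.re) :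
    greenMellin s w = 1 / (4 * Real.pi) *
      (betaIntegral s (w / 2) * (betaIntegral (s - w / 2) (w / 2) / 2)) := by
  have hre : (w / 2).re = w.re / 2 := by simp
  have hΓ : Gamma s ≠ 0 := Gamma_ne_zero_of_re_pos (by linarith)
  rw [betaIntegral_eq_Gamma_mul_div s _ (by linarith) (by linarith),
    betaIntegral_eq_Gamma_mul_div (s - w / 2) _ (by rw [sub_re]; linarith) (by linarith),
    sub_add_cancel, greenMellin]
  field_simp
  ring

theorem hasMellin_greenH_one_add_sq (hw : 0 < w.re) (hws : w.re < 2 * s.re) :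
    HasMellin (fun u : ℝ ↦ greenH s (1 + u ^ 2)) w (greenMellin s w) := by
  have hint := integrable_uncurry_greenMellinKernel hw hws
  simp only [HasMellin, MellinConvergent, mellin, cpow_smul_greenH_one_add_sq]
  refine ⟨hint.integral_prod_right.const_mul _, ?_⟩
  rw [integral_const_mul, ← integral_integral_swap hint,
    setIntegral_congr_fun measurableSet_Ioo fun t ht ↦ integral_greenMellinKernel hw hws ht.2,
    integral_mul_const, ← betaIntegral_eq_setIntegral_Ioo, greenMellin_eq_betaIntegral_mul hw hws]

theorem hasDerivAt_greenMellin_mellin_log_smul (hw : 0 < w.re) (hws : w.re < 2 * s.re) :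
    HasDerivAt (greenMellin s)
      (mellin (fun u : ℝ ↦ Real.log u • greenH s (1 + u ^ 2)) w) w := by
  obtain ⟨a, ha, haw⟩ := exists_between hw
  obtain ⟨b, hwb, hb⟩ := exists_between hws
  have hconv (c : ℝ) (hc : 0 < c) (hcs : c < 2 * s.re) :
      MellinConvergent (fun u : ℝ ↦ greenH s (1 + u ^ 2)) c :=
    (hasMellin_greenH_one_add_sq (by simpa using hc) (by simpa using hcs)).1
  refine (hasDerivAt_mellin_of_mellinConvergent (hconv a ha (by linarith))
    (hconv b (by linarith) hb) ⟨haw, hwb⟩).congr_of_eventuallyEq ?_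
  filter_upwards [continuous_re.continuousAt.eventually_const_lt hw,
    continuous_re.continuousAt.eventually_lt_const hws] with z hz hzs
  exact (hasMellin_greenH_one_add_sq hz hzs).2.symm

end Strip

/-! ### The logarithmic derivative of the Mellin transform -/

lemma ne_neg_natCast_of_re_pos {z : ℂ} (hz : 0 < z.re) (m : ℕ) : z ≠ -m := by
  rintro rfl
  simp at hz
  linarith [m.cast_nonneg (α := ℝ)]

lemma digamma_eq_complexDigamma : digamma = Complex.digamma := by
  funext z
  rw [Complex.digamma_def, logDeriv_apply, digamma]

lemma hasDerivAt_Gamma_of_re_pos {z : ℂ} (hz : 0 < z.re) :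
    HasDerivAt Gamma (Gamma z * digamma z) z := by
  rw [digamma, mul_div_cancel₀ _ (Gamma_ne_zero_of_re_pos hz)]
  exact (differentiableAt_Gamma z (ne_neg_natCast_of_re_pos hz)).hasDerivAt

lemma digamma_add_one_of_re_pos {z : ℂ} (hz : 0 < z.re) :
    digamma (z + 1) = digamma z + z⁻¹ := by
  rw [digamma_eq_complexDigamma, Complex.digamma_apply_add_one z (ne_neg_natCast_of_re_pos hz)]

lemma digamma_one_half : digamma (1 / 2) = -Real.eulerMascheroniConstant - Real.log 4 := by
  have hlog : Real.log 4 = 2 * Real.log 2 := by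
    rw [show (4 : ℝ) = 2 ^ 2 by norm_num, Real.log_pow, Nat.cast_ofNat]
  rw [digamma_eq_complexDigamma, Complex.digamma_one_half, hlog]
  rw [ofReal_mul, ofReal_log two_pos.le, ofReal_ofNat]
  ring

lemma hasDerivAt_greenMellin {s w : ℂ} (hw : 0 < w.re) (hws : w.re < 2 * s.re) :
    HasDerivAt (greenMellin s) (greenMellin s w *
      (digamma (w / 2) - (digamma (s - w / 2) + digamma (s + w / 2)) / 2)) w := by
  have hre : (w / 2).re = w.re / 2 := by simp
  have hsub : 0 < (s - w / 2).re := by rw [sub_re]; linarith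
  have hadd : 0 < (s + w / 2).re := by rw [add_re]; linarith
  have hΓ : Gamma (s + w / 2) ≠ 0 := Gamma_ne_zero_of_re_pos hadd
  have hhalf : HasDerivAt (fun w : ℂ ↦ w / 2) (1 / 2) w := (hasDerivAt_id w).div_const 2
  have dhalf := (hasDerivAt_Gamma_of_re_pos (by linarith)).comp w hhalf
  have dsub := (hasDerivAt_Gamma_of_re_pos hsub).comp w (hhalf.const_sub s)
  have dadd := (hasDerivAt_Gamma_of_re_pos hadd).comp w (hhalf.const_add s)
  have hπ : (Real.pi : ℂ) ≠ 0 := ofReal_ne_zero.2 Real.pi_ne_zero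
  refine (((dhalf.pow 2).mul dsub).div (dadd.const_mul (8 * Real.pi : ℂ))
    (mul_ne_zero (mul_ne_zero (by norm_num) hπ) hΓ)).congr_deriv ?_
  simp only [greenMellin, Function.comp_apply, Pi.pow_apply, Pi.mul_apply]
  field_simp
  ring

lemma greenMellin_one {s : ℂ} (hs : 1 / 2 < s.re) : greenMellin s 1 = 1 / (4 * (2 * s - 1)) := by
  have hre : 0 < (s - 1 / 2).re := by simpa using hs
  have hΓ : Gamma (s - 1 / 2) ≠ 0 := Gamma_ne_zero_of_re_pos hre
  have hπ : (Real.pi : ℂ) ≠ 0 := ofReal_ne_zero.2 Real.pi_ne_zero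
  have hs0 : s - 1 / 2 ≠ 0 := ne_zero_of_re_pos hre
  have hΓπ : Gamma (1 / 2) ^ 2 = Real.pi := by
    rw [Gamma_one_half_eq, ← cpow_nat_mul]
    simp
  rw [greenMellin, hΓπ, show s + 1 / 2 = s - 1 / 2 + 1 by ring, Gamma_add_one _ hs0,
    show 2 * s - 1 = 2 * (s - 1 / 2) by ring]
  generalize s - 1 / 2 = z at hΓ hs0 ⊢
  field_simp
  ring

lemma integral_greenH_mul_log_eq_mellin (s : ℂ) :
    ∫ u in Ioi (0 : ℝ), greenH s (1 + u ^ 2) * (Real.log u : ℂ) =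
      mellin (fun u : ℝ ↦ Real.log u • greenH s (1 + u ^ 2)) 1 := by
  simp only [mellin, sub_self, cpow_zero, one_smul, real_smul, mul_comm]

/-- For `Re s > 1/2`,
`4(2s-1) ∫₀^∞ g_s(1+u²) log u du = -γ - log 4 - Ψ(s+1/2) + 1/(2s-1)`,
where `γ` is the Euler–Mascheroni constant and `Ψ` the digamma function. -/
theorem integral_greenH_mul_log (s : ℂ) (hs : 1 / 2 < s.re) :
    4 * (2 * s - 1) * ∫ u in Set.Ioi (0:ℝ), greenH s (1 + u ^ 2) * (Real.log u : ℂ) =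
      -(Real.eulerMascheroniConstant : ℂ) - (Real.log 4 : ℂ) - digamma (s + 1 / 2)
        + 1 / (2 * s - 1) := by
  have hw : (0 : ℝ) < (1 : ℂ).re := by simp
  have hws : (1 : ℂ).re < 2 * s.re := by rw [one_re]; linarith
  have hre : 0 < (s - 1 / 2).re := by simpa using hs
  have hs0 : 2 * s - 1 ≠ 0 := by
    rw [show 2 * s - 1 = 2 * (s - 1 / 2) by ring]
    exact mul_ne_zero two_ne_zero (ne_zero_of_re_pos hre)
  have hshift : digamma (s + 1 / 2) = digamma (s - 1 / 2) + 2 / (2 * s - 1) := by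
    rw [show s + 1 / 2 = s - 1 / 2 + 1 by ring, digamma_add_one_of_re_pos hre,
      show s - 1 / 2 = (2 * s - 1) / 2 by ring, inv_div]
  rw [integral_greenH_mul_log_eq_mellin,
    (hasDerivAt_greenMellin_mellin_log_smul hw hws).unique (hasDerivAt_greenMellin hw hws),
    greenMellin_one hs, digamma_one_half, hshift]
  field_simp
  ring
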